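/- In the minimalistic affine super Yangian Y_ℏ(ŝl(m|n,Π)) with recursively defined higher generators x^±_{α_i,r}, h_{α_i,r} (r ≥ 2), one has for all i, j ∈ I and all r ≥ 0: [h̃_{α_i,1}, x^±_{α_j,r}] = ± a_{ij} x^±_{α_j,r+1}, and [h_{α_i,0}, x^±_{α_j,r}] = ± a_{ij} x^±_{α_j,r}. -/

import Mathlib

/-!
Common framework for formalizing statements about affine super Yangians
`Y_ℏ(ŝl(m|n,Π))` attached to a simple root system `Π` of the affine
Kac–Moody superalgebra `ŝl(m|n)` of type `A^{(1)}(m−1|n−1)`.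
-/

noncomputable section

namespace ASY

open scoped TensorProduct

/-- The ground ring `ℂ[ℏ]`. -/
abbrev R : Type := Polynomial ℂ

/-- The formal deformation parameter `ℏ`. -/
def hbar : R := Polynomial.X

/-- `1/2` as an element of `ℂ[ℏ]`. -/
def half : R := Polynomial.C (1/2 : ℂ)

/-- The sign `(−1)^{p(a)p(b)}` attached to parities `pa`, `pb`. -/
def sg (pa pb : Bool) : R := if pa && pb then -1 else 1

section SuperOps

variable {Y : Type*} [Ring Y] [Algebra R Y]

/-- The supercommutator `[a,b] = ab − (−1)^{p(a)p(b)} ba` of homogeneous elements of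
parities `pa` and `pb`. -/
def sbr (pa pb : Bool) (x y : Y) : Y := x * y - sg pa pb • (y * x)

/-- The super anticommutator `{a,b} = ab + (−1)^{p(a)p(b)} ba`. -/
def sac (pa pb : Bool) (x y : Y) : Y := x * y + sg pa pb • (y * x)

/-- Iterated super-adjoint action `(ad x)^k y` for `x` of parity `pa` and `y` of parity `pb`. -/
def adN (pa pb : Bool) (x : Y) : ℕ → Y → Y
  | 0, y => y
  | k + 1, y => sbr pa (xor pb (pa && decide (k % 2 = 1))) x (adN pa pb x k y)

/-- Iterated super-bracket `[x₁,[x₂,…,[x_k, y]…]]`, all `xᵢ` of parity `pa`, `y` of parity `pb`. -/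
def adSeq (pa pb : Bool) : List Y → Y → Y
  | [], y => y
  | x :: l, y => sbr pa (xor pb (pa && decide (l.length % 2 = 1))) x (adSeq pa pb l y)

end SuperOps

/-- A simple root system `Π` of the affine Kac–Moody superalgebra `ŝl(m|n)`
(type `A^{(1)}(m−1|n−1)`): a cyclic arrangement of the `m + n` weights
`ε₁,…,ε_m, δ₁,…,δ_n`, recorded by the type of the weight at each position
(`false` = an `ε`-weight of norm `+1`, `true` = a `δ`-weight of norm `−1`);
the simple roots are `α_i = e_i − e_{i+1}` (indices mod `m+n`). -/
structure SimpleRootSystem (m n : ℕ) : Type where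
  /-- the type of the weight at each position -/
  τ : Fin (m + n) → Bool
  /-- there are exactly `n` weights of `δ`-type -/
  card_delta : (Finset.univ.filter fun k => τ k = true).card = n

namespace SimpleRootSystem

variable {m n : ℕ}

/-- The norm `(e_k, e_k) = ±1` of the `k`-th weight. -/
def w (P : SimpleRootSystem m n) (k : Fin (m + n)) : ℤ := if P.τ k then -1 else 1

variable [NeZero (m + n)]

/-- The coefficient of `e_k` in the simple root `α_i = e_i − e_{i+1}`. -/
def coeffα (i k : Fin (m + n)) : ℤ := (if k = i then 1 else 0) - (if k = i + 1 then 1 else 0)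

/-- The (symmetric) Cartan matrix `a_{ij} = (α_i, α_j)` of `Π`. -/
def a (P : SimpleRootSystem m n) (i j : Fin (m + n)) : ℤ :=
  ∑ k, P.w k * coeffα i k * coeffα j k

/-- The parity of the simple root `α_i` (`true` iff `α_i` is odd, iff `a_{ii} = 0`). -/
def par (P : SimpleRootSystem m n) (i : Fin (m + n)) : Bool := P.τ i != P.τ (i + 1)

/-- The reflection `s_{α_i}` on simple root systems: on the weight arrangement it
swaps the weights at positions `i` and `i+1`.  For `α_i` even it preserves `Π`;
for `α_i` odd it is the odd reflection `Π ↦ Π₁`. -/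
def reflect (P : SimpleRootSystem m n) (i : Fin (m + n)) : SimpleRootSystem m n where
  τ := P.τ ∘ Equiv.swap i (i + 1)
  card_delta := by
    have h1 : (Finset.univ.filter fun k => (P.τ ∘ Equiv.swap i (i + 1)) k = true).card
        = (Finset.univ.filter fun k => P.τ k = true).card :=
      Finset.card_equiv (Equiv.swap i (i + 1)) (fun k => by simp)
    rw [h1, P.card_delta]

/-- Applying a word of simple reflections to a simple root system. -/
def applyWord (P : SimpleRootSystem m n) : List (Fin (m + n)) → SimpleRootSystem m n
  | [] => P
  | c :: l => applyWord (P.reflect c) l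

/-- The word consists of even reflections at every stage (i.e. it represents an
element of the Weyl group, generated by even reflections). -/
def IsEvenWord (P : SimpleRootSystem m n) : List (Fin (m + n)) → Prop
  | [] => True
  | c :: l => P.par c = false ∧ IsEvenWord (P.reflect c) l

end SimpleRootSystem

end ASY

namespace ASY

/-- Generators of the minimalistic affine super Yangian: `x^±_{α_i,r}`, `h_{α_i,r}`
with `i ∈ I` and `r ∈ {0,1}`. -/
inductive MGen (N : ℕ) : Type
  | xp (i : Fin N) (r : Fin 2)
  | xm (i : Fin N) (r : Fin 2)
  | h (i : Fin N) (r : Fin 2)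

/-- The free algebra on the minimalistic generators. -/
abbrev MFree (m n : ℕ) : Type := FreeAlgebra R (MGen (m + n))

section MinDefs

variable {m n : ℕ}

/-- `x^+_{α_i,r}` in the free algebra. -/
def MXp (i : Fin (m + n)) (r : Fin 2) : MFree m n := FreeAlgebra.ι R (MGen.xp i r)

/-- `x^−_{α_i,r}` in the free algebra. -/
def MXm (i : Fin (m + n)) (r : Fin 2) : MFree m n := FreeAlgebra.ι R (MGen.xm i r)

/-- `h_{α_i,r}` in the free algebra. -/
def MH (i : Fin (m + n)) (r : Fin 2) : MFree m n := FreeAlgebra.ι R (MGen.h i r)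

/-- `h̃_{α_i,1} = h_{α_i,1} − (ℏ/2) h_{α_i,0}²` in the free algebra. -/
def MHt (i : Fin (m + n)) : MFree m n := MH i 1 - (half * hbar) • (MH i 0 * MH i 0)

variable [NeZero (m + n)]

/-- The defining relations of the minimalistic affine super Yangian `Y_ℏ(ŝl(m|n,Π))`. -/
inductive MRel (P : SimpleRootSystem m n) : MFree m n → MFree m n → Prop
  /-- `[h_{α_i,r}, h_{α_j,s}] = 0` -/
  | hh (i j : Fin (m + n)) (r s : Fin 2) :
      MRel P (sbr false false (MH i r) (MH j s)) 0
  /-- `[x^+_{α_i,0}, x^−_{α_j,0}] = δ_{ij} h_{α_i,0}` -/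
  | pm00 (i j : Fin (m + n)) :
      MRel P (sbr (P.par i) (P.par j) (MXp i 0) (MXm j 0)) (if i = j then MH i 0 else 0)
  /-- `[x^+_{α_i,1}, x^−_{α_j,0}] = δ_{ij} h_{α_i,1}` -/
  | pm10 (i j : Fin (m + n)) :
      MRel P (sbr (P.par i) (P.par j) (MXp i 1) (MXm j 0)) (if i = j then MH i 1 else 0)
  /-- `[x^+_{α_i,0}, x^−_{α_j,1}] = δ_{ij} h_{α_i,1}` -/
  | pm01 (i j : Fin (m + n)) :
      MRel P (sbr (P.par i) (P.par j) (MXp i 0) (MXm j 1)) (if i = j then MH i 1 else 0)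
  /-- `[h_{α_i,0}, x^+_{α_j,r}] = a_{ij} x^+_{α_j,r}` -/
  | hxp (i j : Fin (m + n)) (r : Fin 2) :
      MRel P (sbr false (P.par j) (MH i 0) (MXp j r)) (((P.a i j : ℤ) : R) • MXp j r)
  /-- `[h_{α_i,0}, x^−_{α_j,r}] = −a_{ij} x^−_{α_j,r}` -/
  | hxm (i j : Fin (m + n)) (r : Fin 2) :
      MRel P (sbr false (P.par j) (MH i 0) (MXm j r)) ((-(P.a i j : ℤ) : R) • MXm j r)
  /-- `[x^+_{α_i,1},x^+_{α_j,0}] − [x^+_{α_i,0},x^+_{α_j,1}] = (ℏ a_{ij}/2){x^+_{α_i,0},x^+_{α_j,0}}` -/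
  | mixp (i j : Fin (m + n)) :
      MRel P (sbr (P.par i) (P.par j) (MXp i 1) (MXp j 0)
          - sbr (P.par i) (P.par j) (MXp i 0) (MXp j 1))
        ((half * hbar * ((P.a i j : ℤ) : R)) • sac (P.par i) (P.par j) (MXp i 0) (MXp j 0))
  /-- `[x^−_{α_i,1},x^−_{α_j,0}] − [x^−_{α_i,0},x^−_{α_j,1}] = −(ℏ a_{ij}/2){x^−_{α_i,0},x^−_{α_j,0}}` -/
  | mixm (i j : Fin (m + n)) :
      MRel P (sbr (P.par i) (P.par j) (MXm i 1) (MXm j 0)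
          - sbr (P.par i) (P.par j) (MXm i 0) (MXm j 1))
        ((-(half * hbar * ((P.a i j : ℤ) : R))) • sac (P.par i) (P.par j) (MXm i 0) (MXm j 0))
  /-- `[h̃_{α_i,1}, x^+_{α_j,0}] = a_{ij} x^+_{α_j,1}` -/
  | htxp (i j : Fin (m + n)) :
      MRel P (sbr false (P.par j) (MHt i) (MXp j 0)) (((P.a i j : ℤ) : R) • MXp j 1)
  /-- `[h̃_{α_i,1}, x^−_{α_j,0}] = −a_{ij} x^−_{α_j,1}` -/
  | htxm (i j : Fin (m + n)) :
      MRel P (sbr false (P.par j) (MHt i) (MXm j 0)) ((-(P.a i j : ℤ) : R) • MXm j 1)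
  /-- Serre relation `(ad x^+_{α_i,0})^{1+|a_{ij}|}(x^+_{α_j,0}) = 0`, `i ≠ j` -/
  | serrep (i j : Fin (m + n)) (hij : i ≠ j) :
      MRel P (adN (P.par i) (P.par j) (MXp i 0) (1 + (P.a i j).natAbs) (MXp j 0)) 0
  /-- Serre relation `(ad x^−_{α_i,0})^{1+|a_{ij}|}(x^−_{α_j,0}) = 0`, `i ≠ j` -/
  | serrem (i j : Fin (m + n)) (hij : i ≠ j) :
      MRel P (adN (P.par i) (P.par j) (MXm i 0) (1 + (P.a i j).natAbs) (MXm j 0)) 0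
  /-- `[x^+_{α_t,0}, x^+_{α_t,0}] = 0` for `α_t` odd -/
  | oddp (t : Fin (m + n)) (ht : P.par t = true) :
      MRel P (sbr true true (MXp t 0) (MXp t 0)) 0
  /-- `[x^−_{α_t,0}, x^−_{α_t,0}] = 0` for `α_t` odd -/
  | oddm (t : Fin (m + n)) (ht : P.par t = true) :
      MRel P (sbr true true (MXm t 0) (MXm t 0)) 0
  /-- `[[x^+_{α_{t−1},0},x^+_{α_t,0}],[x^+_{α_t,0},x^+_{α_{t+1},0}]] = 0` for `α_t` odd -/
  | oddSp (t : Fin (m + n)) (ht : P.par t = true) :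
      MRel P (sbr (xor (P.par (t - 1)) true) (xor true (P.par (t + 1)))
        (sbr (P.par (t - 1)) true (MXp (t - 1) 0) (MXp t 0))
        (sbr true (P.par (t + 1)) (MXp t 0) (MXp (t + 1) 0))) 0
  /-- `[[x^−_{α_{t−1},0},x^−_{α_t,0}],[x^−_{α_t,0},x^−_{α_{t+1},0}]] = 0` for `α_t` odd -/
  | oddSm (t : Fin (m + n)) (ht : P.par t = true) :
      MRel P (sbr (xor (P.par (t - 1)) true) (xor true (P.par (t + 1)))
        (sbr (P.par (t - 1)) true (MXm (t - 1) 0) (MXm t 0))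
        (sbr true (P.par (t + 1)) (MXm t 0) (MXm (t + 1) 0))) 0

/-- The minimalistic affine super Yangian `Y_ℏ(ŝl(m|n,Π))`, presented on the
generators `x^±_{α_i,r}`, `h_{α_i,r}` (`r ∈ {0,1}`) by the minimalistic relations. -/
abbrev Ymin (P : SimpleRootSystem m n) : Type := RingQuot (MRel P)

/-- The canonical projection from the free algebra onto `Y_ℏ(ŝl(m|n,Π))`. -/
def mkY (P : SimpleRootSystem m n) : MFree m n →ₐ[R] Ymin P := RingQuot.mkAlgHom R (MRel P)

/-- The generator `x^+_{α_i,r}` of `Y_ℏ(ŝl(m|n,Π))`. -/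
def xgp (P : SimpleRootSystem m n) (i : Fin (m + n)) (r : Fin 2) : Ymin P := mkY P (MXp i r)

/-- The generator `x^−_{α_i,r}` of `Y_ℏ(ŝl(m|n,Π))`. -/
def xgm (P : SimpleRootSystem m n) (i : Fin (m + n)) (r : Fin 2) : Ymin P := mkY P (MXm i r)

/-- The generator `h_{α_i,r}` of `Y_ℏ(ŝl(m|n,Π))`. -/
def hg (P : SimpleRootSystem m n) (i : Fin (m + n)) (r : Fin 2) : Ymin P := mkY P (MH i r)

/-- The element `h̃_{α_i,1} = h_{α_i,1} − (ℏ/2)h_{α_i,0}²` of `Y_ℏ(ŝl(m|n,Π))`. -/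
def htilY (P : SimpleRootSystem m n) (i : Fin (m + n)) : Ymin P := mkY P (MHt i)

/-- The scalar `a_{i+1,i}⁻¹ ∈ ℂ ⊆ ℂ[ℏ]`. -/
def acoef (P : SimpleRootSystem m n) (i : Fin (m + n)) : R :=
  Polynomial.C (((P.a (i + 1) i : ℤ) : ℂ)⁻¹)

/-- The recursively defined higher generators
`x^+_{α_i,r+1} := a_{i+1,i}⁻¹ [h̃_{α_{i+1},1}, x^+_{α_i,r}]` (`r ≥ 1`). -/
def xpn (P : SimpleRootSystem m n) (i : Fin (m + n)) : ℕ → Ymin P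
  | 0 => xgp P i 0
  | 1 => xgp P i 1
  | r + 2 => acoef P i • sbr false (P.par i) (htilY P (i + 1)) (xpn P i (r + 1))

/-- The recursively defined higher generators
`x^−_{α_i,r+1} := −a_{i+1,i}⁻¹ [h̃_{α_{i+1},1}, x^−_{α_i,r}]` (`r ≥ 1`). -/
def xmn (P : SimpleRootSystem m n) (i : Fin (m + n)) : ℕ → Ymin P
  | 0 => xgm P i 0
  | 1 => xgm P i 1
  | r + 2 => (-acoef P i) • sbr false (P.par i) (htilY P (i + 1)) (xmn P i (r + 1))

/-- The recursively defined higher Cartan generators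
`h_{α_i,r+1} := [x^+_{α_i,r+1}, x^−_{α_i,0}]` (`r ≥ 1`). -/
def hcn (P : SimpleRootSystem m n) (i : Fin (m + n)) : ℕ → Ymin P
  | 0 => hg P i 0
  | 1 => hg P i 1
  | r + 2 => sbr (P.par i) (P.par i) (xpn P i (r + 2)) (xmn P i 0)

end MinDefs

end ASY

namespace ASY

/-!
The elements `h_{α_i,0}` and `h̃_{α_i,1}` are even, so bracketing with them is an ordinary
commutator, and they commute pairwise, so these commutators commute as operators. Since `a_{j+1,j}`
is invertible, the relation `[h̃_{α_{j+1},1}, x^±_{α_j,0}] = ± a_{j+1,j} x^±_{α_j,1}` extends the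
recursion `x^±_{α_j,r+1} = ± a_{j+1,j}⁻¹ [h̃_{α_{j+1},1}, x^±_{α_j,r}]` down to `r = 0`. Every
`x^±_{α_j,r}` is thus obtained from `x^±_{α_j,0}` by operators commuting with `ad h_{α_i,0}` and
`ad h̃_{α_i,1}`, and the defining relations in degree `0` propagate to all degrees.
-/

lemma apply_eq_smul_add_of_recursion {S M : Type*} [CommSemiring S] [AddCommMonoid M] [Module S M]
    (s : ℕ) {U V : Module.End S M} (hUV : Commute U V) {x : ℕ → M} {b c : S}
    (hx : ∀ r, x (r + 1) = c • V (x r)) (h0 : U (x 0) = b • x s) (r : ℕ) :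
    U (x r) = b • x (r + s) := by
  induction r with
  | zero => rwa [zero_add]
  | succ r ih =>
    calc U (x (r + 1)) = c • V (U (x r)) := by
          rw [hx, map_smul, ← Module.End.mul_apply, hUV.eq, Module.End.mul_apply]
      _ = b • (c • V (x (r + s))) := by rw [ih, map_smul, smul_comm]
      _ = b • x (r + 1 + s) := by rw [← hx, Nat.add_right_comm]

section Algebra

variable {S Y : Type*} [CommRing S] [Ring Y] [Algebra S Y] {u v w : Y}

lemma commute_sub_smul_mul_self (huv : Commute u v) (huw : Commute u w) (c : S) :
    Commute u (v - c • (w * w)) :=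
  huv.sub_right ((huw.mul_right huw).smul_right c)

attribute [local instance] LieRing.ofAssociativeRing

lemma commute_ad (h : Commute u v) : Commute (LieAlgebra.ad S Y u) (LieAlgebra.ad S Y v) := by
  rw [commute_iff_lie_eq, ← LieHom.map_lie, h.lie_eq, map_zero]

variable [Algebra R Y]

lemma sbr_false_left (p : Bool) (u y : Y) : sbr false p u y = LieAlgebra.ad R Y u y := by
  simp [sbr, sg, Ring.lie_def]

lemma sbr_false_left_eq_zero {p : Bool} : sbr false p u v = 0 ↔ Commute u v := by
  rw [sbr_false_left, LieAlgebra.ad_apply, commute_iff_lie_eq]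

lemma sbr_eq_smul_add_of_recursion (s : ℕ) (huv : Commute u v) {p : Bool} {x : ℕ → Y} {b c : R}
    (hx : ∀ r, x (r + 1) = c • sbr false p v (x r)) (h0 : sbr false p u (x 0) = b • x s) (r : ℕ) :
    sbr false p u (x r) = b • x (r + s) := by
  simp only [sbr_false_left] at hx h0 ⊢
  exact apply_eq_smul_add_of_recursion s (commute_ad huv) hx h0 r

end Algebra

namespace SimpleRootSystem

variable {m n : ℕ}

lemma w_ne_zero (P : SimpleRootSystem m n) (k : Fin (m + n)) : P.w k ≠ 0 := by
  unfold w
  split <;> decide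

variable [NeZero (m + n)]

lemma a_eq (P : SimpleRootSystem m n) (i j : Fin (m + n)) :
    P.a i j = P.w i * coeffα j i - P.w (i + 1) * coeffα j (i + 1) := by
  simp only [a, coeffα.eq_def i, mul_sub, sub_mul, mul_ite, ite_mul, mul_one, mul_zero, zero_mul,
    Finset.sum_sub_distrib, Finset.sum_ite_eq', Finset.mem_univ, if_true]

lemma a_succ_self (hmn : 3 ≤ m + n) (P : SimpleRootSystem m n) (j : Fin (m + n)) :
    P.a (j + 1) j = -P.w (j + 1) := by
  have one_ne : (1 : Fin (m + n)) ≠ 0 := by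
    simp [Fin.ext_iff, Nat.mod_eq_of_lt (by omega : 1 < m + n)]
  have two_ne : (1 + 1 : Fin (m + n)) ≠ 0 := by
    simp [Fin.ext_iff, Fin.val_add, Nat.mod_eq_of_lt (by omega : 2 < m + n)]
  simp [a_eq, coeffα, add_assoc, one_ne, two_ne]

lemma a_succ_self_ne_zero (hmn : 3 ≤ m + n) (P : SimpleRootSystem m n) (j : Fin (m + n)) :
    P.a (j + 1) j ≠ 0 := by
  rw [P.a_succ_self hmn]
  exact neg_ne_zero.mpr (P.w_ne_zero _)

end SimpleRootSystem

section Relations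

variable {m n : ℕ} [NeZero (m + n)] (P : SimpleRootSystem m n) (i j : Fin (m + n))

lemma sbr_mkY_of_rel {P : SimpleRootSystem m n} {p q : Bool} {x y z : MFree m n}
    (h : MRel P (sbr p q x y) z) : sbr p q (mkY P x) (mkY P y) = mkY P z := by
  have h' : mkY P (sbr p q x y) = mkY P z := RingQuot.mkAlgHom_rel R h
  rw [← h']
  simp only [sbr, map_sub, map_mul, map_smul]

lemma commute_hg_hg (r s : Fin 2) : Commute (hg P i r) (hg P j s) :=
  sbr_false_left_eq_zero.mp ((sbr_mkY_of_rel (MRel.hh i j r s)).trans (map_zero _))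

lemma htilY_eq : htilY P i = hg P i 1 - (half * hbar) • (hg P i 0 * hg P i 0) := by
  simp only [htilY, MHt, hg, map_sub, map_smul, map_mul]

lemma commute_hg_htilY (r : Fin 2) : Commute (hg P i r) (htilY P j) := by
  rw [htilY_eq]
  exact commute_sub_smul_mul_self (Y := Ymin P) (commute_hg_hg P i j r 1)
    (commute_hg_hg P i j r 0) _

lemma commute_htilY_htilY : Commute (htilY P i) (htilY P j) := by
  have h (r : Fin 2) : Commute (htilY P i) (hg P j r) := (commute_hg_htilY P j i r).symm
  rw [htilY_eq P j]
  exact commute_sub_smul_mul_self (Y := Ymin P) (h 1) (h 0) _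

lemma sbr_hg_xgp (r : Fin 2) :
    sbr false (P.par j) (hg P i 0) (xgp P j r) = ((P.a i j : ℤ) : R) • xgp P j r :=
  (sbr_mkY_of_rel (MRel.hxp i j r)).trans (map_smul _ _ _)

lemma sbr_hg_xgm (r : Fin 2) :
    sbr false (P.par j) (hg P i 0) (xgm P j r) = (-(P.a i j : ℤ) : R) • xgm P j r :=
  (sbr_mkY_of_rel (MRel.hxm i j r)).trans (map_smul _ _ _)

lemma sbr_htilY_xgp_zero :
    sbr false (P.par j) (htilY P i) (xgp P j 0) = ((P.a i j : ℤ) : R) • xgp P j 1 :=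
  (sbr_mkY_of_rel (MRel.htxp i j)).trans (map_smul _ _ _)

lemma sbr_htilY_xgm_zero :
    sbr false (P.par j) (htilY P i) (xgm P j 0) = (-(P.a i j : ℤ) : R) • xgm P j 1 :=
  (sbr_mkY_of_rel (MRel.htxm i j)).trans (map_smul _ _ _)

end Relations

section Recursion

variable {m n : ℕ} [NeZero (m + n)] {P : SimpleRootSystem m n} {j : Fin (m + n)}

lemma acoef_mul_a (ha : P.a (j + 1) j ≠ 0) : acoef P j * ((P.a (j + 1) j : ℤ) : R) = 1 := by
  rw [acoef, ← Polynomial.C_eq_intCast, ← Polynomial.C_mul,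
    inv_mul_cancel₀ (Int.cast_ne_zero.mpr ha), Polynomial.C_1]

lemma xpn_succ (ha : P.a (j + 1) j ≠ 0) (r : ℕ) :
    xpn P j (r + 1) = acoef P j • sbr false (P.par j) (htilY P (j + 1)) (xpn P j r) := by
  cases r with
  | zero => rw [xpn, xpn, sbr_htilY_xgp_zero, smul_smul, acoef_mul_a ha, one_smul]
  | succ r => rfl

lemma xmn_succ (ha : P.a (j + 1) j ≠ 0) (r : ℕ) :
    xmn P j (r + 1) = (-acoef P j) • sbr false (P.par j) (htilY P (j + 1)) (xmn P j r) := by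
  cases r with
  | zero => rw [xmn, xmn, sbr_htilY_xgm_zero, smul_smul, neg_mul_neg, acoef_mul_a ha, one_smul]
  | succ r => rfl

end Recursion

theorem htilde_raises_degree_general {m n : ℕ} [NeZero (m + n)] (P : SimpleRootSystem m n)
    (i : Fin (m + n)) {j : Fin (m + n)} (ha : P.a (j + 1) j ≠ 0) (r : ℕ) :
    sbr false (P.par j) (htilY P i) (xpn P j r) = ((P.a i j : ℤ) : R) • xpn P j (r + 1) ∧
    sbr false (P.par j) (htilY P i) (xmn P j r) = (-(P.a i j : ℤ) : R) • xmn P j (r + 1) ∧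
    sbr false (P.par j) (hg P i 0) (xpn P j r) = ((P.a i j : ℤ) : R) • xpn P j r ∧
    sbr false (P.par j) (hg P i 0) (xmn P j r) = (-(P.a i j : ℤ) : R) • xmn P j r := by
  have h_htil : Commute (htilY P i) (htilY P (j + 1)) := commute_htilY_htilY P i (j + 1)
  have h_hg : Commute (hg P i 0) (htilY P (j + 1)) := commute_hg_htilY P i (j + 1) 0
  exact ⟨sbr_eq_smul_add_of_recursion 1 h_htil (xpn_succ ha) (sbr_htilY_xgp_zero P i j) r,
    sbr_eq_smul_add_of_recursion 1 h_htil (xmn_succ ha) (sbr_htilY_xgm_zero P i j) r,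
    sbr_eq_smul_add_of_recursion 0 h_hg (xpn_succ ha) (sbr_hg_xgp P i j 0) r,
    sbr_eq_smul_add_of_recursion 0 h_hg (xmn_succ ha) (sbr_hg_xgm P i j 0) r⟩

/-- In the minimalistic affine super Yangian `Y_ℏ(ŝl(m|n,Π))` with
recursively defined higher generators `x^±_{α_i,r}`, `h_{α_i,r}` (`r ≥ 2`), one has for all
`i, j ∈ I` and all `r ≥ 0`: `[h̃_{α_i,1}, x^±_{α_j,r}] = ± a_{ij} x^±_{α_j,r+1}` and
`[h_{α_i,0}, x^±_{α_j,r}] = ± a_{ij} x^±_{α_j,r}`. -/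
theorem htilde_raises_degree (m n : ℕ) [NeZero (m + n)]
    (hm : 2 ≤ m) (hn : 2 ≤ n) (hmn : m ≠ n)
    (P : SimpleRootSystem m n) :
    ∀ (i j : Fin (m + n)) (r : ℕ),
      sbr false (P.par j) (htilY P i) (xpn P j r) = (((P.a i j : ℤ)) : R) • xpn P j (r + 1) ∧
      sbr false (P.par j) (htilY P i) (xmn P j r) = ((-(P.a i j : ℤ)) : R) • xmn P j (r + 1) ∧
      sbr false (P.par j) (hg P i 0) (xpn P j r) = (((P.a i j : ℤ)) : R) • xpn P j r ∧
      sbr false (P.par j) (hg P i 0) (xmn P j r) = ((-(P.a i j : ℤ)) : R) • xmn P j r :=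
  fun i j r => htilde_raises_degree_general P i (P.a_succ_self_ne_zero (by omega) j) r

end ASY
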